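/- Let −1 < a < 0. There exists a constant C(a) > 0 such that for all x, y > 0 and all t ≠ 0: (i) if xy/(2|t|) ≤ 1 then |S_a(x,y,t)| ≤ C(a) |t|^{−(a+1)/2}; (ii) if xy/(2|t|) ≥ 1 and xy ≥ 1 then |S_a(x,y,t)| ≤ C(a) |t|^{−1/2} (xy)^{−a/2}; (iii) if xy/(2|t|) ≥ 1 and xy ≤ 1 then |S_a(x,y,t)| ≤ C(a) |t|^{−1/2}. -/

import Mathlib

open MeasureTheory Filter Set

noncomputable def besselJ (ν : ℂ) (z : ℝ) : ℂ :=
  ∑' k : ℕ, ((-1 : ℂ) ^ k / (Complex.Gamma (k + 1) * Complex.Gamma (ν + k + 1))) *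
    ((z : ℂ) / 2) ^ (2 * (k : ℂ) + ν)

noncomputable def Skernel (a x y t : ℝ) : ℂ :=
  if 0 < t then
    Complex.exp (-(Complex.I) * (((a + 1) * Real.pi / 4 : ℝ) : ℂ)) *
      (((2 * |t|) ^ (-(a + 1) / 2) : ℝ) : ℂ) *
      (((x * y / (2 * |t|)) ^ ((1 - a) / 2) : ℝ) : ℂ) *
      besselJ (((a - 1) / 2 : ℝ) : ℂ) (x * y / (2 * |t|)) *
      Complex.exp (Complex.I * ((((x ^ 2 + y ^ 2) / (4 * |t|)) : ℝ) : ℂ))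
  else
    Complex.exp ((Complex.I) * (((a + 1) * Real.pi / 4 : ℝ) : ℂ)) *
      (((2 * |t|) ^ (-(a + 1) / 2) : ℝ) : ℂ) *
      (((x * y / (2 * |t|)) ^ ((1 - a) / 2) : ℝ) : ℂ) *
      besselJ (((a - 1) / 2 : ℝ) : ℂ) (x * y / (2 * |t|)) *
      Complex.exp (-(Complex.I) * ((((x ^ 2 + y ^ 2) / (4 * |t|)) : ℝ) : ℂ))

/-!
Removing the factor `(z / 2) ^ ν` from `J_ν`, where `ν = (a - 1) / 2` and `z = x y / (2 |t|)`,
shows that the modulus of the kernel is `2 ^ (-a) * |t| ^ (-(a + 1) / 2) * ‖R z‖` with `R` entire.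
For `z ≤ 1` the function `R` is bounded by continuity. For `z ≥ 1` it solves
`R'' + (a / z) R' + R = 0`, so that `h = z ^ (a / 2) R` solves `h'' = (c / z² - 1) h` with
`c = a² / 4 - a / 2`. As `c / z²` is integrable at infinity, the energy `‖h'‖² + ‖h‖²` stays
bounded, whence `‖R z‖ ≤ K z ^ (-a / 2)`. The third regime follows from the bound of the second
one because `(x y) ^ (-a / 2) ≤ 1` when `x y ≤ 1` and `a < 0`.
-/

open scoped Nat

section BesselClifford

/-- The Bessel–Clifford function `∑ wᵏ / (k! Γ(s + k))`, the entire function of `w` underlying the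
series of `J_{s-1}`. At a pole of `Γ` the junk value `1 / 0 = 0` is that of the entire function
`1 / Γ`, so the definition is the standard one for every complex `s`. -/
noncomputable def besselClifford (s w : ℂ) : ℂ :=
  ∑' k : ℕ, w ^ k / (k ! * Complex.Gamma (s + k))

lemma besselClifford_term_succ (s w : ℂ) (k : ℕ) :
    ((k + 1 : ℕ) : ℂ) * (s + k) * (w ^ (k + 1) / ((k + 1)! * Complex.Gamma (s + (k + 1 : ℕ)))) =
      w * (w ^ k / (k ! * Complex.Gamma (s + k))) := by
  have hk : (k : ℂ) + 1 ≠ 0 := k.cast_add_one_ne_zero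
  have hΓ := Complex.one_div_Gamma_eq_self_mul_one_div_Gamma_add_one (s + k)
  simp only [div_eq_mul_inv, mul_inv, hΓ, Nat.factorial_succ, Nat.cast_mul, Nat.cast_add_one,
    ← add_assoc]
  field_simp
  ring

lemma summable_besselClifford (s w : ℂ) :
    Summable fun k : ℕ => w ^ k / (k ! * Complex.Gamma (s + k)) := by
  refine summable_of_ratio_norm_eventually_le (r := 1 / 2) (by norm_num) ?_
  filter_upwards [eventually_ge_atTop ⌈1 + ‖s‖⌉₊, eventually_ge_atTop ⌈2 * ‖w‖⌉₊] with k hs hw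
  have hsk : 1 ≤ ‖s + k‖ := by
    have hsub := norm_sub_le (s + k) s
    rw [add_sub_cancel_left, Complex.norm_natCast] at hsub
    linarith [Nat.ceil_le.1 hs]
  have hterm := congrArg norm (besselClifford_term_succ s w k)
  rw [norm_mul, norm_mul, norm_mul w, Complex.norm_natCast, Nat.cast_add_one] at hterm
  set F := ‖w ^ k / (k ! * Complex.Gamma (s + k))‖
  set F' := ‖w ^ (k + 1) / ((k + 1)! * Complex.Gamma (s + (k + 1 : ℕ)))‖
  have hk : (0 : ℝ) < k + 1 := k.cast_add_one_pos
  refine le_of_mul_le_mul_left ?_ hk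
  calc (k + 1) * F' ≤ (k + 1) * ‖s + k‖ * F' := by
        gcongr
        exact le_mul_of_one_le_right hk.le hsk
    _ = ‖w‖ * F := hterm
    _ ≤ (k + 1) / 2 * F := by
        gcongr
        linarith [Nat.ceil_le.1 hw]
    _ = (k + 1) * (1 / 2 * F) := by ring

lemma deriv_besselClifford_term_succ (s w : ℂ) (k : ℕ) :
    deriv (fun z : ℂ => z ^ (k + 1) / ((k + 1)! * Complex.Gamma (s + (k + 1 : ℕ)))) w =
      w ^ k / (k ! * Complex.Gamma (s + 1 + k)) := by
  have hk : (k : ℂ) + 1 ≠ 0 := k.cast_add_one_ne_zero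
  rw [deriv_div_const, deriv_pow_field, Nat.add_sub_cancel, Nat.factorial_succ, Nat.cast_mul,
    mul_assoc, Nat.cast_add_one, mul_div_mul_left _ _ hk, add_assoc s 1, add_comm (1 : ℂ)]

lemma hasDerivAt_besselClifford (s w : ℂ) :
    HasDerivAt (besselClifford s) (besselClifford (s + 1) w) w := by
  set U := Metric.ball (0 : ℂ) (‖w‖ + 1)
  have hw : w ∈ U := by simp [U]
  have hsum := (summable_besselClifford s (‖w‖ + 1 : ℝ)).norm
  have hterm_diff (k : ℕ) :
      DifferentiableOn ℂ (fun z : ℂ => z ^ k / (k ! * Complex.Gamma (s + k))) U := by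
    fun_prop
  have hterm_le (k : ℕ) (z : ℂ) (hz : z ∈ U) : ‖z ^ k / (k ! * Complex.Gamma (s + k))‖ ≤
      ‖((‖w‖ + 1 : ℝ) : ℂ) ^ k / (k ! * Complex.Gamma (s + k))‖ := by
    rw [norm_div, norm_div, norm_pow, norm_pow, Complex.norm_of_nonneg (by positivity)]
    gcongr
    exact (mem_ball_zero_iff.1 hz).le
  have hdiff : DifferentiableAt ℂ (besselClifford s) w :=
    (Complex.differentiableOn_tsum_of_summable_norm hsum hterm_diff Metric.isOpen_ball
      hterm_le).differentiableAt (Metric.isOpen_ball.mem_nhds hw)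
  have hderiv := Complex.hasSum_deriv_of_summable_norm hsum hterm_diff Metric.isOpen_ball
    hterm_le hw
  have hderiv_eq : deriv (besselClifford s) w = besselClifford (s + 1) w := by
    refine hderiv.tsum_eq.symm.trans ?_
    rw [hderiv.summable.tsum_eq_zero_add]
    simp only [deriv_besselClifford_term_succ, pow_zero, deriv_const, zero_add]
    rfl
  exact hderiv_eq ▸ hdiff.hasDerivAt

lemma besselClifford_eq_add (s w : ℂ) :
    besselClifford s w = s * besselClifford (s + 1) w + w * besselClifford (s + 2) w := by
  have h0 := summable_besselClifford s w
  have h1 := summable_besselClifford (s + 1) w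
  have h2 := summable_besselClifford (s + 2) w
  rw [besselClifford, h0.tsum_eq_zero_add, besselClifford, h1.tsum_eq_zero_add, besselClifford,
    mul_add, add_assoc, ← tsum_mul_left, ← tsum_mul_left,
    ← (((summable_nat_add_iff 1).2 h1).mul_left s).tsum_add (h2.mul_left w)]
  congr 1
  · have hΓ := Complex.one_div_Gamma_eq_self_mul_one_div_Gamma_add_one s
    simpa using hΓ
  · refine tsum_congr fun k => ?_
    have hk : (k : ℂ) + 1 ≠ 0 := k.cast_add_one_ne_zero
    have hΓ := Complex.one_div_Gamma_eq_self_mul_one_div_Gamma_add_one (s + 1 + k)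
    have e0 : s + ((k + 1 : ℕ) : ℂ) = s + 1 + k := by push_cast; ring
    have e1 : s + 1 + ((k + 1 : ℕ) : ℂ) = s + 1 + k + 1 := by push_cast; ring
    have e2 : s + 2 + (k : ℂ) = s + 1 + k + 1 := by ring
    rw [e0, e1, e2, Nat.factorial_succ]
    simp only [div_eq_mul_inv, mul_inv, hΓ, Nat.cast_mul, Nat.cast_add_one]
    field_simp
    ring

end BesselClifford

section ReducedBesselJ

/-- The even entire function `(z / 2) ^ (-ν) * J_ν(z)`, which carries the size of the Schrödinger
kernel. -/
noncomputable def reducedBesselJ (ν z : ℂ) : ℂ :=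
  besselClifford (ν + 1) (-(z / 2) ^ 2)

lemma besselJ_eq_cpow_mul_reducedBesselJ (ν : ℂ) {z : ℝ} (hz : z ≠ 0) :
    besselJ ν z = ((z : ℂ) / 2) ^ ν * reducedBesselJ ν z := by
  have hz2 : (z : ℂ) / 2 ≠ 0 := div_ne_zero (Complex.ofReal_ne_zero.2 hz) two_ne_zero
  rw [reducedBesselJ, besselClifford, ← tsum_mul_left, besselJ]
  refine tsum_congr fun k => ?_
  have hpow : ((z : ℂ) / 2) ^ (2 * (k : ℂ)) = (((z : ℂ) / 2) ^ 2) ^ k := by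
    rw [← pow_mul, ← Complex.cpow_natCast, Nat.cast_mul, Nat.cast_two]
  rw [Complex.cpow_add _ _ hz2, hpow, Complex.Gamma_nat_eq_factorial, neg_pow (_ ^ 2),
    add_right_comm ν]
  ring

lemma hasDerivAt_reducedBesselJ (ν z : ℂ) :
    HasDerivAt (reducedBesselJ ν) (-(z / 2) * reducedBesselJ (ν + 1) z) z := by
  have hinner : HasDerivAt (fun z : ℂ => -(z / 2) ^ 2) (-(z / 2)) z :=
    (((hasDerivAt_id z).div_const 2).pow 2).neg.congr_deriv (by
      simp only [id_eq, Nat.cast_ofNat, Nat.add_one_sub_one, pow_one]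
      ring)
  exact ((hasDerivAt_besselClifford _ _).comp z hinner).congr_deriv (mul_comm _ _)

lemma reducedBesselJ_eq_sub (ν z : ℂ) :
    reducedBesselJ ν z =
      (ν + 1) * reducedBesselJ (ν + 1) z - (z / 2) ^ 2 * reducedBesselJ (ν + 2) z := by
  rw [reducedBesselJ, besselClifford_eq_add, neg_mul, ← sub_eq_add_neg, add_right_comm ν 1 2]
  rfl

/-- The equation `R'' = -((2ν + 1) / z) R' - R` for `R = reducedBesselJ ν`, with its derivative
`R' = -(z / 2) * reducedBesselJ (ν + 1) z` written out. -/
lemma hasDerivAt_neg_half_mul_reducedBesselJ (ν : ℂ) {z : ℂ} (hz : z ≠ 0) :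
    HasDerivAt (fun z => -(z / 2) * reducedBesselJ (ν + 1) z)
      (-((2 * ν + 1) / z) * (-(z / 2) * reducedBesselJ (ν + 1) z) - reducedBesselJ ν z) z := by
  refine (((hasDerivAt_id z).div_const 2).neg.mul
    (hasDerivAt_reducedBesselJ (ν + 1) z)).congr_deriv ?_
  rw [reducedBesselJ_eq_sub ν, add_assoc ν 1 1, one_add_one_eq_two]
  simp only [Pi.neg_apply, id_eq]
  field_simp
  ring

end ReducedBesselJ

section PerturbedOscillator

variable {E : Type*} [NormedAddCommGroup E] [InnerProductSpace ℝ E]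

lemma antitoneOn_exp_mul_oscillator_energy {h h' : ℝ → E} {q Q : ℝ → ℝ} {D : Set ℝ}
    (hD : Convex ℝ D) (hh : ∀ z ∈ D, HasDerivAt h (h' z) z)
    (hh' : ∀ z ∈ D, HasDerivAt h' ((q z - 1) • h z) z)
    (hQ : ∀ z ∈ D, HasDerivAt Q (-|q z|) z) :
    AntitoneOn (fun z => Real.exp (Q z) * (‖h' z‖ ^ 2 + ‖h z‖ ^ 2)) D := by
  have hderiv (z : ℝ) (hz : z ∈ D) :
      HasDerivAt (fun z => Real.exp (Q z) * (‖h' z‖ ^ 2 + ‖h z‖ ^ 2))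
        (Real.exp (Q z) * (q z * (2 * inner ℝ (h z) (h' z)) -
          |q z| * (‖h' z‖ ^ 2 + ‖h z‖ ^ 2))) z := by
    refine ((hQ z hz).exp.mul ((hh' z hz).norm_sq.add (hh z hz).norm_sq)).congr_deriv ?_
    rw [inner_smul_right, real_inner_comm]
    simp only [Pi.add_apply]
    ring
  refine antitoneOn_of_hasDerivWithinAt_nonpos hD
    (fun z hz => (hderiv z hz).continuousAt.continuousWithinAt)
    (fun z hz => (hderiv z (interior_subset hz)).hasDerivWithinAt) fun z _ => ?_
  refine mul_nonpos_of_nonneg_of_nonpos (Real.exp_pos _).le (sub_nonpos.2 ?_)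
  have hinner : |2 * inner ℝ (h z) (h' z)| ≤ ‖h' z‖ ^ 2 + ‖h z‖ ^ 2 := by
    rw [abs_mul, abs_two]
    nlinarith [abs_real_inner_le_norm (h z) (h' z), sq_nonneg (‖h' z‖ - ‖h z‖)]
  calc q z * (2 * inner ℝ (h z) (h' z)) ≤ |q z| * |2 * inner ℝ (h z) (h' z)| :=
        (le_abs_self _).trans (abs_mul _ _).le
    _ ≤ |q z| * (‖h' z‖ ^ 2 + ‖h z‖ ^ 2) := by gcongr

lemma exists_norm_le_of_perturbed_oscillator {h h' : ℝ → E} {q Q : ℝ → ℝ} {z₀ : ℝ}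
    (hh : ∀ z ≥ z₀, HasDerivAt h (h' z) z)
    (hh' : ∀ z ≥ z₀, HasDerivAt h' ((q z - 1) • h z) z)
    (hQ : ∀ z ≥ z₀, HasDerivAt Q (-|q z|) z) (hQ_nonneg : ∀ z ≥ z₀, 0 ≤ Q z) :
    ∃ K, ∀ z ≥ z₀, ‖h z‖ ≤ K := by
  refine ⟨√(Real.exp (Q z₀) * (‖h' z₀‖ ^ 2 + ‖h z₀‖ ^ 2)), fun z hz => Real.le_sqrt_of_sq_le ?_⟩
  calc ‖h z‖ ^ 2 ≤ ‖h' z‖ ^ 2 + ‖h z‖ ^ 2 := le_add_of_nonneg_left (sq_nonneg _)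
    _ ≤ Real.exp (Q z) * (‖h' z‖ ^ 2 + ‖h z‖ ^ 2) :=
        le_mul_of_one_le_left (by positivity) (Real.one_le_exp (hQ_nonneg z hz))
    _ ≤ _ := antitoneOn_exp_mul_oscillator_energy (convex_Ici z₀) hh hh' hQ self_mem_Ici hz hz

/-- Liouville's substitution `h = z ^ (a / 2) g` removes the first-order term of the equation. -/
lemma hasDerivAt_liouville_of_bessel_ode {a z : ℝ} {g g' : ℝ → E} (hz : 0 < z)
    (hg : HasDerivAt g (g' z) z) (hg' : HasDerivAt g' (-(a / z) • g' z - g z) z) :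
    HasDerivAt (fun z => z ^ (a / 2) • (g' z + (a / 2 / z) • g z))
      (((a ^ 2 / 4 - a / 2) / z ^ 2 - 1) • z ^ (a / 2) • g z) z := by
  have hpow : HasDerivAt (fun z : ℝ => z ^ (a / 2)) (a / 2 * (z ^ (a / 2) / z)) z :=
    Real.rpow_sub_one hz.ne' (a / 2) ▸ Real.hasDerivAt_rpow_const (Or.inl hz.ne')
  have hcoeff : HasDerivAt (fun z : ℝ => a / 2 / z) (-(a / 2 / z ^ 2)) z :=
    ((hasDerivAt_inv hz.ne').const_mul (a / 2)).congr_deriv (by ring)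
  refine (hpow.smul (hg'.add (hcoeff.smul hg))).congr_deriv ?_
  simp only [Pi.add_apply, Pi.smul_apply']
  match_scalars <;> field_simp <;> ring

lemma exists_norm_le_rpow_of_bessel_ode {a : ℝ} {g g' : ℝ → E}
    (hg : ∀ z ≥ 1, HasDerivAt g (g' z) z)
    (hg' : ∀ z ≥ 1, HasDerivAt g' (-(a / z) • g' z - g z) z) :
    ∃ K, ∀ z ≥ 1, ‖g z‖ ≤ K * z ^ (-a / 2) := by
  set c := a ^ 2 / 4 - a / 2
  have hQ (z : ℝ) (hz : z ≥ 1) : HasDerivAt (fun z => |c| / z) (-|c / z ^ 2|) z := by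
    have hz0 : z ≠ 0 := by positivity
    refine ((hasDerivAt_inv hz0).const_mul |c|).congr_deriv ?_
    rw [abs_div, abs_of_nonneg (sq_nonneg z)]
    ring
  have hh (z : ℝ) (hz : z ≥ 1) : HasDerivAt (fun z => z ^ (a / 2) • g z)
      (z ^ (a / 2) • (g' z + (a / 2 / z) • g z)) z := by
    have hz0 : z ≠ 0 := by positivity
    refine ((Real.hasDerivAt_rpow_const (Or.inl hz0)).smul (hg z hz)).congr_deriv ?_
    rw [Real.rpow_sub_one hz0]
    match_scalars <;> ring
  obtain ⟨K, hK⟩ := exists_norm_le_of_perturbed_oscillator hh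
    (fun z hz => hasDerivAt_liouville_of_bessel_ode (by positivity) (hg z hz) (hg' z hz))
    hQ (fun z hz => by positivity)
  refine ⟨K, fun z hz => ?_⟩
  have hz0 : 0 < z := by positivity
  have hKz := hK z hz
  rw [norm_smul, Real.norm_of_nonneg (by positivity)] at hKz
  rwa [neg_div, Real.rpow_neg hz0.le, ← div_eq_mul_inv, le_div_iff₀' (by positivity)]

end PerturbedOscillator

lemma exists_norm_reducedBesselJ_le (ν : ℂ) (r : ℝ) :
    ∃ K, ∀ z : ℂ, ‖z‖ ≤ r → ‖reducedBesselJ ν z‖ ≤ K := by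
  have hcont : Continuous (reducedBesselJ ν) :=
    continuous_iff_continuousAt.2 fun z => (hasDerivAt_reducedBesselJ ν z).continuousAt
  obtain ⟨K, hK⟩ := (isCompact_closedBall (0 : ℂ) r).exists_bound_of_continuousOn
    hcont.continuousOn
  exact ⟨K, fun z hz => hK z (mem_closedBall_zero_iff.2 hz)⟩

lemma exists_norm_reducedBesselJ_ofReal_le_rpow (ν : ℝ) :
    ∃ K, ∀ z : ℝ, 1 ≤ z → ‖reducedBesselJ ν z‖ ≤ K * z ^ (-(2 * ν + 1) / 2) := by
  refine exists_norm_le_rpow_of_bessel_ode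
    (g' := fun z : ℝ => -((z : ℂ) / 2) * reducedBesselJ (ν + 1) z)
    (fun z _ => (hasDerivAt_reducedBesselJ ν z).comp_ofReal) fun z hz => ?_
  have hz0 : z ≠ 0 := by positivity
  have hode := (hasDerivAt_neg_half_mul_reducedBesselJ (ν : ℂ)
    (Complex.ofReal_ne_zero.2 hz0)).comp_ofReal
  simpa only [Complex.real_smul, Complex.ofReal_neg, Complex.ofReal_div, Complex.ofReal_add,
    Complex.ofReal_mul, Complex.ofReal_ofNat, Complex.ofReal_one] using hode

section Skernel

variable {x y t : ℝ}

lemma norm_Skernel_eq_norm_besselJ (a : ℝ) (hx : 0 < x) (hy : 0 < y) :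
    ‖Skernel a x y t‖ = (2 * |t|) ^ (-(a + 1) / 2) * (x * y / (2 * |t|)) ^ ((1 - a) / 2) *
      ‖besselJ (((a - 1) / 2 : ℝ) : ℂ) (x * y / (2 * |t|))‖ := by
  unfold Skernel
  split_ifs <;>
    simp only [neg_mul, Complex.exp_neg, norm_mul, norm_inv, Complex.norm_exp_I_mul_ofReal, inv_one,
      one_mul, mul_one, Complex.norm_real] <;>
    rw [Real.norm_of_nonneg (by positivity), Real.norm_of_nonneg (by positivity)]

lemma norm_Skernel (a : ℝ) (hx : 0 < x) (hy : 0 < y) (ht : t ≠ 0) :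
    ‖Skernel a x y t‖ = 2 ^ (-a) * |t| ^ (-(a + 1) / 2) *
      ‖reducedBesselJ (((a - 1) / 2 : ℝ) : ℂ) ((x * y / (2 * |t|) : ℝ) : ℂ)‖ := by
  have ht' : 0 < |t| := abs_pos.2 ht
  rw [norm_Skernel_eq_norm_besselJ a hx hy]
  set z := x * y / (2 * |t|)
  have hz : 0 < z := by positivity
  have hcpow : ‖((z : ℂ) / 2) ^ (((a - 1) / 2 : ℝ) : ℂ)‖ = (z / 2) ^ (-((1 - a) / 2)) := by
    have hcast : (z : ℂ) / 2 = ((z / 2 : ℝ) : ℂ) := by push_cast; rfl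
    rw [hcast, Complex.norm_cpow_eq_rpow_re_of_pos (by positivity), Complex.ofReal_re]
    ring_nf
  have hz_cancel : z ^ ((1 - a) / 2) * (z / 2) ^ (-((1 - a) / 2)) = 2 ^ ((1 - a) / 2) := by
    rw [Real.rpow_neg (by positivity), Real.div_rpow hz.le zero_le_two]
    field_simp
  have htwo : (2 : ℝ) ^ (-a) = 2 ^ (-(a + 1) / 2) * 2 ^ ((1 - a) / 2) := by
    rw [← Real.rpow_add two_pos]
    ring_nf
  rw [besselJ_eq_cpow_mul_reducedBesselJ _ hz.ne', norm_mul, hcpow,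
    Real.mul_rpow zero_le_two ht'.le, htwo, ← hz_cancel]
  ring

lemma exists_norm_Skernel_le_of_div_le_one (a : ℝ) :
    ∃ K, ∀ x > (0 : ℝ), ∀ y > (0 : ℝ), ∀ t : ℝ, t ≠ 0 → x * y / (2 * |t|) ≤ 1 →
      ‖Skernel a x y t‖ ≤ K * |t| ^ (-(a + 1) / 2) := by
  obtain ⟨K, hK⟩ := exists_norm_reducedBesselJ_le (((a - 1) / 2 : ℝ) : ℂ) 1
  refine ⟨2 ^ (-a) * K, fun x hx y hy t ht hz => ?_⟩
  rw [norm_Skernel a hx hy ht, mul_right_comm]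
  gcongr
  refine hK _ ?_
  rwa [Complex.norm_of_nonneg (by positivity)]

lemma exists_norm_Skernel_le_of_one_le_div (a : ℝ) :
    ∃ K, ∀ x > (0 : ℝ), ∀ y > (0 : ℝ), ∀ t : ℝ, t ≠ 0 → 1 ≤ x * y / (2 * |t|) →
      ‖Skernel a x y t‖ ≤ K * |t| ^ (-(1 : ℝ) / 2) * (x * y) ^ (-a / 2) := by
  obtain ⟨K, hK⟩ := exists_norm_reducedBesselJ_ofReal_le_rpow ((a - 1) / 2)
  refine ⟨2 ^ (-a) * K * 2 ^ (a / 2), fun x hx y hy t ht hz => ?_⟩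
  have ht' : 0 < |t| := abs_pos.2 ht
  have hKz := hK _ hz
  rw [mul_div_cancel₀ _ two_ne_zero, sub_add_cancel] at hKz
  have hpow : |t| ^ (-(a + 1) / 2) * (x * y / (2 * |t|)) ^ (-a / 2) =
      2 ^ (a / 2) * |t| ^ (-(1 : ℝ) / 2) * (x * y) ^ (-a / 2) := by
    have ht_exp : -(a + 1) / 2 = -(1 : ℝ) / 2 + -a / 2 := by ring
    rw [Real.div_rpow (by positivity) (by positivity), Real.mul_rpow zero_le_two ht'.le, ht_exp,
      Real.rpow_add ht', neg_div 2 a, Real.rpow_neg zero_le_two]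
    field_simp
  calc ‖Skernel a x y t‖
      ≤ 2 ^ (-a) * |t| ^ (-(a + 1) / 2) * (K * (x * y / (2 * |t|)) ^ (-a / 2)) := by
        rw [norm_Skernel a hx hy ht]
        gcongr
    _ = 2 ^ (-a) * K * (|t| ^ (-(a + 1) / 2) * (x * y / (2 * |t|)) ^ (-a / 2)) := by ring
    _ = 2 ^ (-a) * K * 2 ^ (a / 2) * |t| ^ (-(1 : ℝ) / 2) * (x * y) ^ (-a / 2) := by
        rw [hpow]
        ring

end Skernel

theorem kernel_dispersive_bound_neg_general (a : ℝ) :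
    ∃ C > (0 : ℝ), ∀ x > (0 : ℝ), ∀ y > (0 : ℝ), ∀ t : ℝ, t ≠ 0 →
      (x * y / (2 * |t|) ≤ 1 → ‖Skernel a x y t‖ ≤ C * |t| ^ (-(a + 1) / 2)) ∧
      (1 ≤ x * y / (2 * |t|) →
        ‖Skernel a x y t‖ ≤ C * |t| ^ (-(1 : ℝ) / 2) * (x * y) ^ (-a / 2)) := by
  obtain ⟨K, hK⟩ := exists_norm_Skernel_le_of_div_le_one a
  obtain ⟨L, hL⟩ := exists_norm_Skernel_le_of_one_le_div a
  refine ⟨max 1 (max K L), by positivity, fun x hx y hy t ht => ⟨fun hz => ?_, fun hz => ?_⟩⟩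
  · refine (hK x hx y hy t ht hz).trans ?_
    gcongr
    exact (le_max_left K L).trans (le_max_right 1 _)
  · refine (hL x hx y hy t ht hz).trans ?_
    gcongr
    exact (le_max_right K L).trans (le_max_right 1 _)

/-- For `-1 < a < 0`, the kernel satisfies the three-regime dispersive bound. -/
theorem kernel_dispersive_bound_neg (a : ℝ) (ha1 : -1 < a) (ha2 : a < 0) :
    ∃ C > (0:ℝ), ∀ x > (0:ℝ), ∀ y > (0:ℝ), ∀ t : ℝ, t ≠ 0 →
      (x * y / (2 * |t|) ≤ 1 → ‖Skernel a x y t‖ ≤ C * |t| ^ (-(a + 1) / 2)) ∧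
      (1 ≤ x * y / (2 * |t|) → 1 ≤ x * y →
        ‖Skernel a x y t‖ ≤ C * |t| ^ (-(1:ℝ) / 2) * (x * y) ^ (-a / 2)) ∧
      (1 ≤ x * y / (2 * |t|) → x * y ≤ 1 →
        ‖Skernel a x y t‖ ≤ C * |t| ^ (-(1:ℝ) / 2)) := by
  obtain ⟨C, hC, hbound⟩ := kernel_dispersive_bound_neg_general a
  refine ⟨C, hC, fun x hx y hy t ht => ?_⟩
  obtain ⟨hsmall, hlarge⟩ := hbound x hx y hy t ht
  exact ⟨hsmall, fun hz _ => hlarge hz, fun hz hxy => (hlarge hz).trans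
    (mul_le_of_le_one_right (by positivity)
      (Real.rpow_le_one (mul_pos hx hy).le hxy (by linarith)))⟩
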